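/- Let n, m ∈ ℕ and let K ⊆ ℝ^m satisfy K = −K and K + K ⊆ C_K·K for some constant C_K ≥ 2 (where K + K is the Minkowski sum and C_K·K the dilate). Let ‖·‖_X : ℝ^m → [0,∞) be a function satisfying ‖−x‖_X = ‖x‖_X and the quasi-triangle inequality ‖x + y‖_X ≤ C_X·(‖x‖_X + ‖y‖_X) for all x, y ∈ ℝ^m, for some constant C_X ∈ (0,∞), and such that ‖c·x‖_X = |c|·‖x‖_X for all scalars c and x ∈ ℝ^m. Then for every matrix N ∈ ℝ^{n×m}: C_X^{−1}·rad_X(K, ker N) ≤ inf_φ sup_{x ∈ K} ‖x − φ(N x)‖_X ≤ C_K·rad_X(K, ker N), where rad_X(K, E) := sup{‖x‖_X : x ∈ K ∩ E} for a set E ⊆ ℝ^m, and the infimum runs over all (arbitrary, not necessarily linear) mappings φ : ℝ^n → ℝ^m. -/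

import Mathlib

open scoped ENNReal NNReal Pointwise

/-- The kernel of a matrix `N ∈ ℝ^{n×m}`, as a subset of `ℝ^m`. -/
def kerSet {n m : ℕ} (N : Fin n → Fin m → ℝ) : Set (Fin m → ℝ) :=
  {x | ∀ i, ∑ j, N i j * x j = 0}

/-- For a symmetric quasi-convex set `K` (with `K + K ⊆ C_K K`, `C_K ≥ 2`)
and a quasi-norm `‖·‖_X` (with quasi-triangle constant `C_X`), for every matrix `N`:
`C_X⁻¹ rad_X(K, ker N) ≤ inf_φ sup_{x ∈ K} ‖x - φ(Nx)‖_X ≤ C_K rad_X(K, ker N)`,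
the infimum running over arbitrary maps `φ : ℝ^n → ℝ^m`. Suprema and the infimum are taken
in `[0,∞]` to account for possibly infinite values. -/
theorem statement12 (n m : ℕ) (K : Set (Fin m → ℝ)) (CK : ℝ) (hCK : 2 ≤ CK)
    (hsym : K = -K) (hquasi : K + K ⊆ CK • K)
    (normX : (Fin m → ℝ) → ℝ) (hnn : ∀ x, 0 ≤ normX x)
    (hXneg : ∀ x, normX (-x) = normX x)
    (CX : ℝ) (hCX : 0 < CX)
    (htri : ∀ x y, normX (x + y) ≤ CX * (normX x + normX y))
    (hhom : ∀ (c : ℝ) (x : Fin m → ℝ), normX (c • x) = |c| * normX x)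
    (N : Fin n → Fin m → ℝ) :
    ENNReal.ofReal CX⁻¹ * (⨆ x ∈ K ∩ kerSet N, ENNReal.ofReal (normX x)) ≤
        (⨅ φ : (Fin n → ℝ) → (Fin m → ℝ),
          ⨆ x ∈ K, ENNReal.ofReal (normX (x - φ (fun i => ∑ j, N i j * x j)))) ∧
      (⨅ φ : (Fin n → ℝ) → (Fin m → ℝ),
          ⨆ x ∈ K, ENNReal.ofReal (normX (x - φ (fun i => ∑ j, N i j * x j)))) ≤
        ENNReal.ofReal CK * (⨆ x ∈ K ∩ kerSet N, ENNReal.ofReal (normX x)) := by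
  classical
  constructor
  · refine le_iInf fun φ => ?_
    rw [ENNReal.mul_iSup]
    refine iSup_le fun x => ?_
    rw [ENNReal.mul_iSup]
    refine iSup_le fun hx => ?_
    obtain ⟨hxK, hxN⟩ := hx
    have hxK' : -x ∈ K := by
      rw [hsym]
      simpa using hxK
    have e1 : (fun i => ∑ j, N i j * x j) = 0 := funext hxN
    have e2 : (fun i => ∑ j, N i j * (-x) j) = 0 := by
      funext i
      have h := hxN i
      simp [h]
    have b1 := le_iSup₂ (f := fun (x : Fin m → ℝ) (_ : x ∈ K) =>
      ENNReal.ofReal (normX (x - φ (fun i => ∑ j, N i j * x j)))) x hxK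
    have b2 := le_iSup₂ (f := fun (x : Fin m → ℝ) (_ : x ∈ K) =>
      ENNReal.ofReal (normX (x - φ (fun i => ∑ j, N i j * x j)))) (-x) hxK'
    simp only [e1] at b1
    simp only [e2] at b2
    have key : CX⁻¹ * normX x ≤ max (normX (x - φ 0)) (normX (-x - φ 0)) := by
      have h := htri (x - φ 0) (x + φ 0)
      have h2 : (x - φ 0) + (x + φ 0) = (2 : ℝ) • x := by
        rw [two_smul]; abel
      have h3 : normX (x + φ 0) = normX (-x - φ 0) := by
        rw [← hXneg (x + φ 0)]
        congr 1
        abel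
      rw [h2, h3, hhom, abs_of_pos (by norm_num : (0 : ℝ) < 2)] at h
      rw [inv_mul_le_iff₀ hCX]
      have m1 := le_max_left (normX (x - φ 0)) (normX (-x - φ 0))
      have m2 := le_max_right (normX (x - φ 0)) (normX (-x - φ 0))
      have m3 := mul_le_mul_of_nonneg_left (add_le_add m1 m2) hCX.le
      linarith
    rw [← ENNReal.ofReal_mul (inv_nonneg.mpr hCX.le)]
    refine (ENNReal.ofReal_le_ofReal key).trans ?_
    rcases max_choice (normX (x - φ 0)) (normX (-x - φ 0)) with h | h <;> rw [h]
    · exact b1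
    · exact b2
  · let φ : (Fin n → ℝ) → (Fin m → ℝ) := fun y =>
      if h : ∃ x ∈ K, (fun i => ∑ j, N i j * x j) = y then h.choose else 0
    refine (iInf_le _ φ).trans (iSup₂_le fun x hx => ?_)
    have hex : ∃ z ∈ K, (fun i => ∑ j, N i j * z j) = (fun i => ∑ j, N i j * x j) :=
      ⟨x, hx, rfl⟩
    obtain ⟨z, hz, hzx, hφ⟩ : ∃ z ∈ K, (fun i => ∑ j, N i j * z j) =
        (fun i => ∑ j, N i j * x j) ∧ φ (fun i => ∑ j, N i j * x j) = z :=
      ⟨hex.choose, hex.choose_spec.1, hex.choose_spec.2, dif_pos hex⟩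
    rw [hφ]
    have hz' : -z ∈ K := by
      rw [hsym]
      simpa using hz
    obtain ⟨k, hk, hke⟩ := hquasi (Set.add_mem_add hx hz')
    have hke : CK • k = x - z := by
      rw [sub_eq_add_neg]; exact hke
    have hkN : k ∈ kerSet N := by
      intro i
      have h1 : CK * ∑ j, N i j * k j = 0 := by
        have h2 : ∀ j, CK * (N i j * k j) = N i j * x j - N i j * z j := by
          intro j
          have := congrFun hke j
          simp only [Pi.smul_apply, smul_eq_mul, Pi.sub_apply] at this
          rw [← mul_sub, ← this]; ring
        rw [Finset.mul_sum, Finset.sum_congr rfl fun j _ => h2 j, Finset.sum_sub_distrib]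
        have := congrFun hzx i
        rw [this, sub_self]
      exact (mul_eq_zero.mp h1).resolve_left (by linarith)
    rw [← hke, hhom, abs_of_nonneg (by linarith), ENNReal.ofReal_mul (by linarith)]
    gcongr
    exact le_iSup₂ (f := fun (x : Fin m → ℝ) (_ : x ∈ K ∩ kerSet N) =>
      ENNReal.ofReal (normX x)) k ⟨hk, hkN⟩
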